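/- arXiv:1902.09181 — 3 statements merged into one kernel-verified Lean document; each statement's English description precedes it below -/
import Mathlib

section
/- Let f : ℝ^n → ℝ be L-smooth and μ-strongly convex with 0 < μ ≤ L, let t > 0, and let x⁺ = x - t∇f(x) be one gradient descent step from x ∈ ℝ^n. Then ‖∇f(x⁺)‖ ≤ ρ(t)‖∇f(x)‖, where ρ(t) := max{|1 - Lt|, |1 - μt|}. -/
/-!
Write `g = ∇f(x)` and `g⁺ = ∇f(x⁺)`. The function `h = f - (μ/2)‖·‖²` is convex and satisfies the
descent inequality with constant `L - μ`, so its gradient is cocoercive (Baillon–Haddad):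
`‖w‖² ≤ (L - μ) ⟪w, d⟫`, where `d` is a difference of two points and `w` the corresponding
difference of gradients of `h`. For the points `x, x⁺` one has `d = t g` and
`w = g - g⁺ - μ t g`, and the inequality becomes
`⟪g⁺ - (1 - L t) g, g⁺ - (1 - μ t) g⟫ ≤ 0`.
Thus `g⁺` lies in the ball having the segment from `(1 - L t) g` to `(1 - μ t) g` as a diameter,
and every point of that ball has norm at most `max |1 - L t| |1 - μ t| * ‖g‖`.
-/

section GradNormContraction

variable {E : Type*} [NormedAddCommGroup E] [InnerProductSpace ℝ E]

/-- Points of the ball with diameter `[a • g, b • g]`, described by the obtuse-angle condition. -/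
lemma norm_le_of_inner_sub_smul_nonpos {g u : E} {a b : ℝ}
    (h : inner ℝ (u - a • g) (u - b • g) ≤ 0) : ‖u‖ ≤ max |a| |b| * ‖g‖ := by
  have hexp : ‖u‖ ^ 2 - (a + b) * inner ℝ u g + a * b * ‖g‖ ^ 2 ≤ 0 := by
    simp only [inner_sub_left, inner_sub_right, real_inner_smul_left, real_inner_smul_right,
      real_inner_self_eq_norm_sq, real_inner_comm u g] at h
    linarith
  have hball : ‖u - ((a + b) / 2) • g‖ ≤ |(a - b) / 2| * ‖g‖ := by
    refine (sq_le_sq₀ (norm_nonneg _) (by positivity)).1 ?_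
    rw [mul_pow, sq_abs, norm_sub_sq_real, norm_smul, mul_pow, Real.norm_eq_abs, sq_abs,
      real_inner_smul_right]
    nlinarith
  have hmax : |(a + b) / 2| + |(a - b) / 2| ≤ max |a| |b| := by
    grind
  calc ‖u‖ ≤ ‖u - ((a + b) / 2) • g‖ + ‖((a + b) / 2) • g‖ := by
        simpa using norm_add_le (u - ((a + b) / 2) • g) (((a + b) / 2) • g)
    _ ≤ |(a - b) / 2| * ‖g‖ + |(a + b) / 2| * ‖g‖ := by
        rw [norm_smul, Real.norm_eq_abs]; gcongr
    _ ≤ max |a| |b| * ‖g‖ := by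
        rw [← add_mul, add_comm]; gcongr

/-- Cocoercivity of `G`, the gradient of `h`, from the first-order convexity and descent
inequalities; the case `M = 0` is included. -/
lemma cocoercive_of_lower_upper {h : E → ℝ} {G : E → E} {M : ℝ} (hM : 0 ≤ M)
    (lower : ∀ x z, h x + inner ℝ (G x) (z - x) ≤ h z)
    (upper : ∀ y z, h z ≤ h y + inner ℝ (G y) (z - y) + M / 2 * ‖z - y‖ ^ 2) (x y : E) :
    ‖G x - G y‖ ^ 2 ≤ M * inner ℝ (G x - G y) (x - y) := by
  -- Compare the two bounds at the gradient step `y - s • (G y - G x)`.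
  have half : ∀ (x y : E) (s : ℝ), h x + inner ℝ (G x) (y - x) ≤
      h y + (M / 2 * s ^ 2 - s) * ‖G y - G x‖ ^ 2 := by
    intro x y s
    have h1 := lower x (y - s • (G y - G x))
    have h2 := upper y (y - s • (G y - G x))
    have e1 : y - s • (G y - G x) - x = (y - x) - s • (G y - G x) := by abel
    have e2 : y - s • (G y - G x) - y = -(s • (G y - G x)) := by abel
    rw [e1, inner_sub_right, real_inner_smul_right] at h1
    rw [e2, inner_neg_right, real_inner_smul_right, norm_neg, norm_smul, mul_pow,
      Real.norm_eq_abs, sq_abs] at h2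
    have e3 : inner ℝ (G y) (G y - G x) - inner ℝ (G x) (G y - G x) = ‖G y - G x‖ ^ 2 := by
      rw [← inner_sub_left, real_inner_self_eq_norm_sq]
    rw [← e3] at h2 ⊢
    nlinarith
  have key : ∀ s : ℝ, (2 * s - M * s ^ 2) * ‖G x - G y‖ ^ 2 ≤
      inner ℝ (G x - G y) (x - y) := by
    intro s
    have h1 := half x y s
    have h2 := half y x s
    rw [norm_sub_rev (G y)] at h1
    rw [← neg_sub x y, inner_neg_right] at h1
    rw [inner_sub_left]
    linarith
  rcases hM.eq_or_lt with rfl | hM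
  · by_contra! hne
    have hpos : 0 < ‖G x - G y‖ ^ 2 := by linarith
    -- For `M = 0` the left side of `key` is unbounded in `s` unless the gradients agree.
    have := key ((inner ℝ (G x - G y) (x - y) + 1) / (2 * ‖G x - G y‖ ^ 2))
    rw [zero_mul, sub_zero, ← mul_div_assoc, mul_div_mul_left _ _ two_ne_zero,
      div_mul_cancel₀ _ hpos.ne'] at this
    linarith
  · have := key (1 / M)
    have e : 2 * (1 / M) - M * (1 / M) ^ 2 = 1 / M := by field_simp; norm_num
    rw [e, one_div, inv_mul_le_iff₀ hM] at this
    exact this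

variable [CompleteSpace E]

lemma hasDerivAt_line {f : E → ℝ} (hf : Differentiable ℝ f) (x v : E) (s : ℝ) :
    HasDerivAt (fun s : ℝ => f (x + s • v)) (inner ℝ (gradient f (x + s • v)) v) s := by
  have h1 := (hf (x + s • v)).hasGradientAt.hasFDerivAt
  have h2 : HasDerivAt (fun s : ℝ => x + s • v) v s := by
    simpa using ((hasDerivAt_id s).smul_const v).const_add x
  have h3 := h1.comp_hasDerivAt s h2
  rw [InnerProductSpace.toDual_apply_apply] at h3
  exact h3

/-- The descent lemma. -/
lemma descent_of_lipschitz_gradient {f : E → ℝ} {L : ℝ} (hf : Differentiable ℝ f)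
    (hs : ∀ x y, ‖gradient f x - gradient f y‖ ≤ L * ‖x - y‖) (x z : E) :
    f z ≤ f x + inner ℝ (gradient f x) (z - x) + L / 2 * ‖z - x‖ ^ 2 := by
  set v := z - x with hv
  set φ : ℝ → ℝ := fun s => f (x + s • v) - s * inner ℝ (gradient f x) v -
    s ^ 2 * (L / 2 * ‖v‖ ^ 2) with hφ
  have hd : ∀ s, HasDerivAt φ (inner ℝ (gradient f (x + s • v)) v - inner ℝ (gradient f x) v -
      2 * s * (L / 2 * ‖v‖ ^ 2)) s := by
    intro s
    have h := ((hasDerivAt_line hf x v s).sub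
      ((hasDerivAt_id s).mul_const (inner ℝ (gradient f x) v))).sub
      ((hasDerivAt_pow 2 s).mul_const (L / 2 * ‖v‖ ^ 2))
    rw [one_mul, Nat.cast_ofNat, pow_one] at h
    exact h
  have hanti : AntitoneOn φ (Set.Icc 0 1) := by
    apply antitoneOn_of_deriv_nonpos (convex_Icc 0 1)
      (fun s _ => (hd s).continuousAt.continuousWithinAt)
      (fun s _ => (hd s).differentiableAt.differentiableWithinAt)
    intro s hs'
    rw [interior_Icc] at hs'
    rw [(hd s).deriv, ← inner_sub_left]
    have h1 := real_inner_le_norm (gradient f (x + s • v) - gradient f x) v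
    have h2 := hs (x + s • v) x
    rw [add_sub_cancel_left, norm_smul, Real.norm_eq_abs, abs_of_pos hs'.1] at h2
    nlinarith [mul_le_mul_of_nonneg_right h2 (norm_nonneg v)]
  have := hanti (Set.left_mem_Icc.2 zero_le_one) (Set.right_mem_Icc.2 zero_le_one) zero_le_one
  simp only [hφ, hv, one_smul, zero_smul, add_zero, add_sub_cancel] at this
  linarith

lemma lower_of_strongly_convex {f : E → ℝ} {μ : ℝ} (hf : Differentiable ℝ f)
    (hsc : ConvexOn ℝ Set.univ (fun y => f y - μ / 2 * ‖y‖ ^ 2)) (x z : E) :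
    f x - μ / 2 * ‖x‖ ^ 2 + inner ℝ (gradient f x - μ • x) (z - x) ≤
      f z - μ / 2 * ‖z‖ ^ 2 := by
  have hc := hsc.comp_affineMap (AffineMap.lineMap x z)
  have hd : HasDerivAt ((fun y => f y - μ / 2 * ‖y‖ ^ 2) ∘ (AffineMap.lineMap x z : ℝ → E))
      (inner ℝ (gradient f x - μ • x) (z - x)) 0 := by
    have h1 := hasDerivAt_line hf x (z - x) 0
    have h2 : HasDerivAt (fun s : ℝ => x + s • (z - x)) (z - x) 0 := by
      simpa using ((hasDerivAt_id (0 : ℝ)).smul_const (z - x)).const_add x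
    have h3 := h1.sub (h2.norm_sq.const_mul (μ / 2))
    have e : (fun y => f y - μ / 2 * ‖y‖ ^ 2) ∘ (AffineMap.lineMap x z : ℝ → E) =
        (fun s : ℝ => f (x + s • (z - x))) - fun s => μ / 2 * ‖x + s • (z - x)‖ ^ 2 := by
      ext s
      simp [AffineMap.lineMap_apply, add_comm]
    have e' : inner ℝ (gradient f x - μ • x) (z - x) =
        inner ℝ (gradient f (x + (0 : ℝ) • (z - x))) (z - x) -
          μ / 2 * (2 * inner ℝ (x + (0 : ℝ) • (z - x)) (z - x)) := by
      rw [zero_smul, add_zero, inner_sub_left (gradient f x), real_inner_smul_left]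
      ring
    rw [e, e']
    exact h3
  have := hc.le_slope_of_hasDerivAt (x := 0) (y := 1) (by simp) (by simp) one_pos hd
  rw [slope_def_field] at this
  simp only [Function.comp_apply, AffineMap.lineMap_apply_zero, AffineMap.lineMap_apply_one,
    sub_zero, div_one] at this
  linarith

end GradNormContraction

/-- for `f` `L`-smooth and `μ`-strongly convex, one gradient descent
step contracts the gradient norm by `ρ(t) = max {|1 - Lt|, |1 - μt|}`. -/
theorem grad_descent_grad_norm_contraction {n : ℕ}
    (f : EuclideanSpace ℝ (Fin n) → ℝ)
    (L μ t : ℝ) (hμ : 0 < μ) (hμL : μ ≤ L) (ht : 0 < t)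
    (hf : Differentiable ℝ f)
    (hsmooth : ∀ x y, ‖gradient f x - gradient f y‖ ≤ L * ‖x - y‖)
    (hsc : ConvexOn ℝ Set.univ (fun y => f y - μ / 2 * ‖y‖ ^ 2))
    (x xp : EuclideanSpace ℝ (Fin n))
    (hxp : xp = x - t • gradient f x) :
    ‖gradient f xp‖ ≤ max |1 - L * t| |1 - μ * t| * ‖gradient f x‖ := by
  apply norm_le_of_inner_sub_smul_nonpos
  have hco := cocoercive_of_lower_upper (h := fun y => f y - μ / 2 * ‖y‖ ^ 2)
    (G := fun y => gradient f y - μ • y) (M := L - μ) (by linarith)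
    (fun x z => lower_of_strongly_convex hf hsc x z)
    (by
      intro y z
      have h1 := descent_of_lipschitz_gradient hf hsmooth y z
      have h2 : ‖z‖ ^ 2 = ‖y‖ ^ 2 + 2 * inner ℝ y (z - y) + ‖z - y‖ ^ 2 := by
        rw [← norm_add_sq_real, add_sub_cancel]
      simp only [inner_sub_left (gradient f y), real_inner_smul_left]
      rw [h2]
      linarith) x xp
  set g := gradient f x with hg
  set u := gradient f xp with hu
  have hd : x - xp = t • g := by rw [hxp]; abel
  have hw : g - μ • x - (u - μ • xp) = -(u - (1 - μ * t) • g) := by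
    have : μ • x - μ • xp = (μ * t) • g := by rw [← smul_sub, hd, smul_smul]
    rw [sub_smul, ← this, one_smul]; abel
  have hu' : u - (1 - L * t) • g = (u - (1 - μ * t) • g) + ((L - μ) * t) • g := by
    module
  beta_reduce at hco
  rw [hw, hd, norm_neg, inner_neg_left, real_inner_smul_right] at hco
  rw [hu', inner_add_left, real_inner_self_eq_norm_sq, real_inner_smul_left, real_inner_comm]
  linarith
end

section
/- Let φ = f + g, where f : ℝ^n → ℝ is L-smooth and convex, and g : ℝ^n → (-∞,+∞] is proper, closed and convex. Let 0 < t ≤ 1/L, and let x⁺ = x - t·𝒢_t(x) be one step of the proximal gradient method from x. Then φ(x) ≥ φ(x⁺) + (t/2)‖𝒢_t(x)‖² + (t/2)‖𝒢_t(x⁺)‖². -/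
/-! Write `G = 𝒢ₜ(x)` and `d = ∇f(x) - ∇f(x⁺)`. Optimality of the proximal point gives
`G - ∇f(x) ∈ ∂g(x⁺)` (`inner_le_of_isProxPt`), and a convex smooth `f` satisfies
`f(x) ≥ f(x⁺) + ⟪∇f(x⁺), x - x⁺⟫ + (t/2)‖d‖²` for `t ≤ 1/L` (`convex_smooth_lower_bound`).
Adding the subgradient inequality at `x` to this bound and completing the square yields
`φ(x) ≥ φ(x⁺) + (t/2)‖G‖² + (t/2)‖G - d‖²`. Finally `G - d` is a subgradient of `φ` at `x⁺`, and
the proximal gradient at a point is no longer than any subgradient there: this is monotonicity of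
`∂g` between `x⁺` and the next iterate, followed by Cauchy-Schwarz. -/


/-- `g` is proper: somewhere finite and nowhere `⊥`. -/
def ProperFn {n : ℕ} (g : EuclideanSpace ℝ (Fin n) → EReal) : Prop :=
  (∃ x, g x ≠ ⊤) ∧ ∀ x, g x ≠ ⊥

/-- Convexity of an extended-real-valued function. -/
def ConvexFn {n : ℕ} (g : EuclideanSpace ℝ (Fin n) → EReal) : Prop :=
  ∀ a b : EuclideanSpace ℝ (Fin n), ∀ w : ℝ, 0 ≤ w → w ≤ 1 →
    g (w • a + (1 - w) • b) ≤ ((w : ℝ) : EReal) * g a + (((1 - w : ℝ)) : EReal) * g b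

/-- The composite objective `φ = f + g`. -/
noncomputable def phi {n : ℕ} (f : EuclideanSpace ℝ (Fin n) → ℝ)
    (g : EuclideanSpace ℝ (Fin n) → EReal) (y : EuclideanSpace ℝ (Fin n)) : EReal :=
  (f y : EReal) + g y

/-- `p = prox_{tg}(x)`, i.e. `p` minimizes `u ↦ t g(u) + (1/2)‖u - x‖²`. -/
def IsProxPt {n : ℕ} (g : EuclideanSpace ℝ (Fin n) → EReal) (t : ℝ)
    (x p : EuclideanSpace ℝ (Fin n)) : Prop :=
  ∀ u, (t : EReal) * g p + ((1 / 2 * ‖p - x‖ ^ 2 : ℝ) : EReal)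
    ≤ (t : EReal) * g u + ((1 / 2 * ‖u - x‖ ^ 2 : ℝ) : EReal)

section Smooth

variable {E : Type*} [NormedAddCommGroup E] [InnerProductSpace ℝ E] [CompleteSpace E]

lemma hasDerivAt_comp_line {f : E → ℝ} (hf : Differentiable ℝ f) (u h : E) (s : ℝ) :
    HasDerivAt (fun s : ℝ => f (u + s • h)) (inner ℝ (gradient f (u + s • h)) h) s := by
  have h1 : HasDerivAt (fun s : ℝ => u + s • h) h s := by
    simpa using ((hasDerivAt_id s).smul_const h).const_add u
  have h2 := (hf (u + s • h)).hasGradientAt.hasFDerivAt.comp_hasDerivAt s h1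
  simpa [Function.comp_def] using h2

lemma gradient_inequality {f : E → ℝ} (hf : Differentiable ℝ f)
    (hconv : ConvexOn ℝ Set.univ f) (y v : E) :
    f y + inner ℝ (gradient f y) (v - y) ≤ f v := by
  have hc : ConvexOn ℝ Set.univ (fun s : ℝ => f (y + s • (v - y))) := by
    have := hconv.comp_affineMap (AffineMap.lineMap y v : ℝ →ᵃ[ℝ] E)
    rw [Set.preimage_univ] at this
    have he : f ∘ (AffineMap.lineMap y v : ℝ →ᵃ[ℝ] E) = fun s : ℝ => f (y + s • (v - y)) := by
      ext s
      simp [AffineMap.lineMap_apply, add_comm]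
    rwa [he] at this
  have hd := hasDerivAt_comp_line hf y (v - y) 0
  have := hc.le_slope_of_hasDerivAt (Set.mem_univ 0) (Set.mem_univ 1) one_pos hd
  simp [slope_def_field] at this ⊢
  linarith

/-- The quadratic upper bound (descent lemma) for a function with `L`-Lipschitz gradient: along
the segment, the difference of the two sides is monotone. -/
lemma descent_lemma {f : E → ℝ} {L : ℝ} (hf : Differentiable ℝ f)
    (hsmooth : ∀ x y, ‖gradient f x - gradient f y‖ ≤ L * ‖x - y‖) (u h : E) :
    f (u + h) ≤ f u + inner ℝ (gradient f u) h + L / 2 * ‖h‖ ^ 2 := by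
  have hd : ∀ s : ℝ, HasDerivAt
      (fun s : ℝ => f (u + s • h) - s * inner ℝ (gradient f u) h - L / 2 * ‖h‖ ^ 2 * s ^ 2)
      (inner ℝ (gradient f (u + s • h)) h - inner ℝ (gradient f u) h - L * ‖h‖ ^ 2 * s) s := by
    intro s
    refine (((hasDerivAt_comp_line hf u h s).sub
      ((hasDerivAt_id s).mul_const (inner ℝ (gradient f u) h))).sub
      ((hasDerivAt_pow 2 s).const_mul (L / 2 * ‖h‖ ^ 2))).congr_deriv ?_
    norm_num
    ring
  have hanti := antitoneOn_of_deriv_nonpos (convex_Icc (0 : ℝ) 1)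
    (fun s _ => (hd s).continuousAt.continuousWithinAt)
    (fun s _ => (hd s).differentiableAt.differentiableWithinAt)
    (fun s hs => by
      rw [interior_Icc] at hs
      rw [(hd s).deriv, ← inner_sub_left]
      have h1 := real_inner_le_norm (gradient f (u + s • h) - gradient f u) h
      have h2 := hsmooth (u + s • h) u
      rw [add_sub_cancel_left, norm_smul, Real.norm_of_nonneg hs.1.le] at h2
      nlinarith [mul_le_mul_of_nonneg_right h2 (norm_nonneg h)])
  have := hanti (Set.left_mem_Icc.2 zero_le_one) (Set.right_mem_Icc.2 zero_le_one) zero_le_one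
  simp at this ⊢
  linarith

/-- The gradient inequality of a convex smooth function, strengthened by the quadratic term that
expresses cocoercivity of the gradient. -/
lemma convex_smooth_lower_bound {f : E → ℝ} {L t : ℝ} (ht : 0 < t) (htL : L * t ≤ 1)
    (hf : Differentiable ℝ f)
    (hsmooth : ∀ x y, ‖gradient f x - gradient f y‖ ≤ L * ‖x - y‖)
    (hconv : ConvexOn ℝ Set.univ f) (x y : E) :
    f y + inner ℝ (gradient f y) (x - y) + t / 2 * ‖gradient f x - gradient f y‖ ^ 2 ≤ f x := by
  set d := gradient f x - gradient f y with hd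
  -- Compare both bounds at the point reached from `x` by a step `-t • d`: there the linear
  -- minorant of `f` at `y` lies below the quadratic majorant at `x`.
  have h1 := gradient_inequality hf hconv y (x + -(t • d))
  have h2 := descent_lemma hf hsmooth x (-(t • d))
  have h3 : inner ℝ (gradient f x) d - inner ℝ (gradient f y) d = ‖d‖ ^ 2 := by
    rw [← inner_sub_left, ← hd, real_inner_self_eq_norm_sq]
  rw [show x + -(t • d) - y = (x - y) - t • d by abel, inner_sub_right, inner_smul_right] at h1
  rw [inner_neg_right, inner_smul_right, norm_neg, norm_smul, Real.norm_of_nonneg ht.le] at h2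
  nlinarith [mul_le_mul_of_nonneg_right htL (mul_nonneg ht.le (sq_nonneg ‖d‖))]

end Smooth

/-- The subgradient inequality `t⁻¹ (z - p) ∈ ∂g(p)` at a proximal point `p` of `z`, multiplied by
`t` and tested at a point `u` of the domain. -/
lemma inner_le_of_isProxPt {n : ℕ} {g : EuclideanSpace ℝ (Fin n) → EReal} {t a b : ℝ}
    {z p u : EuclideanSpace ℝ (Fin n)} (ht : 0 < t) (hgconv : ConvexFn g)
    (hp : IsProxPt g t z p) (ha : g p = a) (hb : g u = b) :
    inner ℝ (z - p) (u - p) ≤ t * (b - a) := by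
  -- Minimality against `w • u + (1 - w) • p`, divided by `w`; then `w → 0`.
  have key : ∀ w : ℝ, 0 < w → w ≤ 1 →
      0 ≤ t * (b - a) - inner ℝ (z - p) (u - p) + w * (1 / 2 * ‖u - p‖ ^ 2) := by
    intro w hw hw1
    have h1 := hp (w • u + (1 - w) • p)
    have h2 := hgconv u p w hw.le hw1
    rw [ha, hb] at h2
    rw [ha] at h1
    have h3 := h1.trans (add_le_add_left (mul_le_mul_of_nonneg_left h2
      (EReal.coe_nonneg.2 ht.le)) _)
    norm_cast at h3
    have h4 : w • u + (1 - w) • p - z = w • (u - p) - (z - p) := by module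
    rw [h4, norm_sub_sq_real (w • (u - p)), norm_smul, Real.norm_of_nonneg hw.le, inner_smul_left,
      real_inner_comm, norm_sub_rev p z] at h3
    simp only [conj_trivial] at h3
    refine nonneg_of_mul_nonneg_right (a := w) ?_ hw
    nlinarith
  have hlim : Filter.Tendsto
      (fun w : ℝ => t * (b - a) - inner ℝ (z - p) (u - p) + w * (1 / 2 * ‖u - p‖ ^ 2))
      (nhdsWithin 0 (Set.Ioi 0)) (nhds (t * (b - a) - inner ℝ (z - p) (u - p))) := by
    have : Continuous
      (fun w : ℝ => t * (b - a) - inner ℝ (z - p) (u - p) + w * (1 / 2 * ‖u - p‖ ^ 2)) := by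
      fun_prop
    simpa using (this.tendsto 0).mono_left nhdsWithin_le_nhds
  have := ge_of_tendsto hlim (by
    filter_upwards [Ioc_mem_nhdsGT (one_pos : (0 : ℝ) < 1)] with w hw using key w hw.1 hw.2)
  linarith

/-- A proper function is finite at its proximal points. -/
lemma IsProxPt.exists_coe {n : ℕ} {g : EuclideanSpace ℝ (Fin n) → EReal} {t : ℝ}
    {z p : EuclideanSpace ℝ (Fin n)} (ht : 0 < t) (hproper : ProperFn g)
    (hp : IsProxPt g t z p) : ∃ a : ℝ, g p = a := by
  obtain ⟨⟨u, hu⟩, hbot⟩ := hproper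
  lift g u to ℝ using ⟨hu, hbot u⟩ with b hb
  have h := hp u
  have hne : g p ≠ ⊤ := by
    intro htop
    rw [htop, ← hb, EReal.coe_mul_top_of_pos ht, EReal.top_add_coe] at h
    norm_cast at h
  exact ⟨_, (EReal.coe_toReal hne (hbot p)).symm⟩

/-- refined sufficient decrease property of the proximal gradient
method in the convex case:
`φ(x) ≥ φ(x⁺) + (t/2)‖𝒢ₜ(x)‖² + (t/2)‖𝒢ₜ(x⁺)‖²`. -/
theorem refined_sufficient_decrease_convex {n : ℕ}
    (f : EuclideanSpace ℝ (Fin n) → ℝ) (g : EuclideanSpace ℝ (Fin n) → EReal)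
    (L t : ℝ) (hL : 0 < L) (ht : 0 < t) (htL : t ≤ 1 / L)
    (hf : Differentiable ℝ f)
    (hsmooth : ∀ x y, ‖gradient f x - gradient f y‖ ≤ L * ‖x - y‖)
    (hconv : ConvexOn ℝ Set.univ f)
    (hproper : ProperFn g) (hclosed : LowerSemicontinuous g) (hgconv : ConvexFn g)
    (x xp p q Gx Gxp : EuclideanSpace ℝ (Fin n))
    (hp : IsProxPt g t (x - t • gradient f x) p)
    (hGx : Gx = t⁻¹ • (x - p))
    (hxp : xp = x - t • Gx)
    (hq : IsProxPt g t (xp - t • gradient f xp) q)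
    (hGxp : Gxp = t⁻¹ • (xp - q)) :
    phi f g xp + ((t / 2 * ‖Gx‖ ^ 2 + t / 2 * ‖Gxp‖ ^ 2 : ℝ) : EReal)
      ≤ phi f g x := by
  have hLt : L * t ≤ 1 := by rwa [le_div_iff₀ hL, mul_comm] at htL
  have hxpp : xp = p := by
    rw [hxp, hGx, smul_inv_smul₀ ht.ne', sub_sub_cancel]
  subst hxpp
  obtain ⟨a, ha⟩ := hp.exists_coe ht hproper
  obtain ⟨c, hc⟩ := hq.exists_coe ht hproper
  unfold phi
  rcases eq_or_ne (g x) ⊤ with htop | hfin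
  · rw [htop, EReal.coe_add_top]
    exact le_top
  obtain ⟨b, hb⟩ : ∃ b : ℝ, g x = b := ⟨_, (EReal.coe_toReal hfin (hproper.2 x)).symm⟩
  have hs := inner_le_of_isProxPt ht hgconv hp ha hb
  have hm1 := inner_le_of_isProxPt ht hgconv hp ha hc
  have hm2 := inner_le_of_isProxPt ht hgconv hq hc ha
  have hfx := convex_smooth_lower_bound ht hLt hf hsmooth hconv x xp
  set u := gradient f x
  set v := gradient f xp
  have e1 : x - xp = t • Gx := by rw [hxp, sub_sub_cancel]
  have e2 : xp - q = t • Gxp := by rw [hGxp, smul_inv_smul₀ ht.ne']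
  rw [show x - t • u - xp = t • (Gx - u) by rw [smul_sub, ← e1]; abel] at hs hm1
  rw [show xp - t • v - q = t • (Gxp - v) by rw [smul_sub, ← e2]; abel, e2] at hm2
  rw [show q - xp = -(t • Gxp) by rw [← e2]; abel, inner_neg_right] at hm1
  rw [e1] at hs hfx
  rw [inner_smul_left, inner_smul_right] at hs hm2
  rw [inner_smul_left, inner_smul_right] at hm1
  rw [inner_smul_right] at hfx
  simp only [conj_trivial] at hs hm1 hm2
  -- Monotonicity of `∂g` between `xp` and `q`: add the two subgradient inequalities `hm1`, `hm2`.
  have hmono : inner ℝ Gxp Gxp ≤ inner ℝ (Gx - (u - v)) Gxp := by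
    have h : t * (t * (inner ℝ (Gxp - v) Gxp - inner ℝ (Gx - u) Gxp)) ≤ t * (t * 0) := by
      linarith
    have h' := le_of_mul_le_mul_left (le_of_mul_le_mul_left h ht) ht
    simp only [inner_sub_left] at h' ⊢
    linarith
  have hle : ‖Gxp‖ ^ 2 ≤ ‖Gx - (u - v)‖ ^ 2 := by
    rw [real_inner_self_eq_norm_sq] at hmono
    nlinarith [real_inner_le_norm (Gx - (u - v)) Gxp, sq_nonneg (‖Gx - (u - v)‖ - ‖Gxp‖)]
  -- Complete the square: `‖Gx‖² - ⟪u - v, Gx⟫ + ‖u - v‖² / 2 = ‖Gx‖² / 2 + ‖Gx - (u - v)‖² / 2`.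
  have hs' : t * inner ℝ (Gx - u) Gx ≤ b - a := le_of_mul_le_mul_left hs ht
  rw [inner_sub_left, real_inner_self_eq_norm_sq] at hs'
  have hsq := norm_sub_sq_real Gx (u - v)
  rw [inner_sub_right, real_inner_comm u Gx, real_inner_comm v Gx] at hsq
  rw [ha, hb]
  norm_cast
  nlinarith [mul_le_mul_of_nonneg_left hle ht.le]
end

section
/- Let f : ℝ^n → ℝ be L-smooth and convex, attaining its minimum value min f, and suppose f satisfies the Polyak–Łojasiewicz inequality with constant η > 0: (1/2)‖∇f(x)‖² ≥ η (f(x) − min f) for all x. Let x⁺ = x − (1/L)∇f(x). Then f(x⁺) − min f ≤ ((L − η)/(L + η)) (f(x) − min f). -/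
/-!
For a convex `L`-smooth function, the first-order lower bound at `a` and the quadratic upper bound
at `b`, compared at the point `b - (∇f b - ∇f a) / L`, give the interpolation inequality
`f b ≥ f a + ⟪∇f a, b - a⟫ + ‖∇f b - ∇f a‖² / (2 L)` (`interpolation_inequality`).
With `a = x⁺` and `b = x`, so that `b - a = ∇f x / L`, the cross terms cancel and
`f x - f x⁺ ≥ (‖∇f x‖² + ‖∇f x⁺‖²) / (2 L)`. The Polyak–Łojasiewicz inequality at both `x` and `x⁺`
bounds the right-hand side below by `(η / L) ((f x - min f) + (f x⁺ - min f))`, and rearranging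
yields the rate `(L - η) / (L + η)`.
-/

section

variable {E : Type*} [NormedAddCommGroup E] [InnerProductSpace ℝ E] [CompleteSpace E]

lemma hasDerivAt_along_line {f : E → ℝ} (hf : Differentiable ℝ f) (a d : E) (t : ℝ) :
    HasDerivAt (fun s : ℝ => f (a + s • d)) (inner ℝ (gradient f (a + t • d)) d) t := by
  have h1 : HasDerivAt (fun s : ℝ => a + s • d) d t := by
    simpa using ((hasDerivAt_id t).smul_const d).const_add a
  have h2 := (hf (a + t • d)).hasGradientAt.hasFDerivAt
  rw [← InnerProductSpace.toDual_apply_apply (𝕜 := ℝ)]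
  exact h2.comp_hasDerivAt t h1

lemma convex_tangent_le {f : E → ℝ} (hf : Differentiable ℝ f)
    (hconv : ConvexOn ℝ Set.univ f) (a d : E) :
    f a + inner ℝ (gradient f a) d ≤ f (a + d) := by
  have hc : ConvexOn ℝ Set.univ (fun s : ℝ => f (a + s • d)) := by
    have h := hconv.comp_affineMap (AffineMap.lineMap a (a + d) : ℝ →ᵃ[ℝ] E)
    simpa [Function.comp_def, AffineMap.lineMap_apply, add_comm] using h
  have h := hc.le_slope_of_hasDerivAt (Set.mem_univ 0) (Set.mem_univ 1) zero_lt_one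
    (hasDerivAt_along_line hf a d 0)
  simp [slope_def_field] at h ⊢
  linarith

/-- The descent lemma: a quadratic upper bound from the Lipschitz gradient. -/
lemma le_quadratic_upper_bound {f : E → ℝ} {L : ℝ} (hf : Differentiable ℝ f)
    (hsmooth : ∀ x y, ‖gradient f x - gradient f y‖ ≤ L * ‖x - y‖) (a d : E) :
    f (a + d) ≤ f a + inner ℝ (gradient f a) d + L / 2 * ‖d‖ ^ 2 := by
  -- The gap between the quadratic bound and `f` is nondecreasing along the ray `a + t d`, `t ≥ 0`.
  let g : ℝ → ℝ := fun t =>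
    t * inner ℝ (gradient f a) d + t ^ 2 * (L / 2 * ‖d‖ ^ 2) - f (a + t • d)
  have hg : ∀ t, HasDerivAt g (inner ℝ (gradient f a) d + 2 * t * (L / 2 * ‖d‖ ^ 2)
      - inner ℝ (gradient f (a + t • d)) d) t := by
    intro t
    have h1 := (hasDerivAt_id t).mul_const (inner ℝ (gradient f a) d)
    have h2 := (hasDerivAt_pow 2 t).mul_const (L / 2 * ‖d‖ ^ 2)
    refine ((h1.add h2).sub (hasDerivAt_along_line hf a d t)).congr_deriv ?_
    simp
  have hmono : MonotoneOn g (Set.Ici 0) := by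
    refine monotoneOn_of_deriv_nonneg (convex_Ici 0)
      (fun t _ => (hg t).continuousAt.continuousWithinAt)
      (fun t _ => (hg t).differentiableAt.differentiableWithinAt) ?_
    intro t ht
    have ht : 0 < t := by simpa using ht
    rw [(hg t).deriv]
    have h1 := real_inner_le_norm (gradient f (a + t • d) - gradient f a) d
    have h2 := hsmooth (a + t • d) a
    rw [add_sub_cancel_left, norm_smul, Real.norm_of_nonneg ht.le] at h2
    rw [inner_sub_left] at h1
    nlinarith [mul_le_mul_of_nonneg_right h2 (norm_nonneg d)]
  have h := hmono (Set.mem_Ici.2 le_rfl) (Set.mem_Ici.2 zero_le_one) zero_le_one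
  simp [g] at h ⊢
  linarith

lemma interpolation_inequality {f : E → ℝ} {L : ℝ} (hL : 0 < L) (hf : Differentiable ℝ f)
    (hsmooth : ∀ x y, ‖gradient f x - gradient f y‖ ≤ L * ‖x - y‖)
    (hconv : ConvexOn ℝ Set.univ f) (a b : E) :
    f a + inner ℝ (gradient f a) (b - a) + 1 / (2 * L) * ‖gradient f b - gradient f a‖ ^ 2
      ≤ f b := by
  set v := gradient f b - gradient f a with hv
  -- `b - v / L` minimizes the quadratic upper bound at `b` minus the tangent at `a`.
  have h1 := convex_tangent_le hf hconv a ((b - a) + (-(1 / L)) • v)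
  have h2 := le_quadratic_upper_bound hf hsmooth b ((-(1 / L)) • v)
  have e : a + ((b - a) + (-(1 / L)) • v) = b + (-(1 / L)) • v := by abel
  rw [e, inner_add_right, inner_smul_right] at h1
  rw [inner_smul_right, norm_smul, mul_pow, Real.norm_eq_abs, sq_abs] at h2
  have h3 : inner ℝ (gradient f b) v - inner ℝ (gradient f a) v = ‖v‖ ^ 2 := by
    rw [← inner_sub_left, ← hv, real_inner_self_eq_norm_sq]
  have h4 : L / 2 * ((-(1 / L)) ^ 2 * ‖v‖ ^ 2) = 1 / (2 * L) * ‖v‖ ^ 2 := by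
    field_simp
  have h5 : 1 / L * inner ℝ (gradient f b) v - 1 / L * inner ℝ (gradient f a) v
      = 2 * (1 / (2 * L) * ‖v‖ ^ 2) := by
    rw [← mul_sub, h3]
    field_simp
  linarith

end


/-- improved linear rate `(L - η)/(L + η)` of gradient descent with
step size `1/L` under the Polyak–Łojasiewicz inequality. -/
theorem pl_linear_rate_step_inv_L {n : ℕ}
    (f : EuclideanSpace ℝ (Fin n) → ℝ)
    (L η fmin : ℝ) (hL : 0 < L) (hη : 0 < η)
    (hf : Differentiable ℝ f)
    (hsmooth : ∀ x y, ‖gradient f x - gradient f y‖ ≤ L * ‖x - y‖)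
    (hconv : ConvexOn ℝ Set.univ f)
    (hmin : IsLeast (Set.range f) fmin)
    (hPL : ∀ x, η * (f x - fmin) ≤ 1 / 2 * ‖gradient f x‖ ^ 2)
    (x xp : EuclideanSpace ℝ (Fin n))
    (hxp : xp = x - (1 / L) • gradient f x) :
    f xp - fmin ≤ (L - η) / (L + η) * (f x - fmin) := by
  have h := interpolation_inequality hL hf hsmooth hconv xp x
  have e : x - xp = (1 / L) • gradient f x := by rw [hxp]; abel
  rw [e, inner_smul_right, norm_sub_sq_real, real_inner_comm (gradient f x)] at h
  have h1 := hPL x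
  have h2 := hPL xp
  have h3 : L * (f x - f xp) ≥ 1 / 2 * ‖gradient f x‖ ^ 2 + 1 / 2 * ‖gradient f xp‖ ^ 2 := by
    have h' := mul_le_mul_of_nonneg_left h hL.le
    have key : ∀ c p q r : ℝ, L * (c + 1 / L * p + 1 / (2 * L) * (q - 2 * p + r))
        = L * c + 1 / 2 * q + 1 / 2 * r := by
      intro c p q r
      field_simp
      ring
    rw [key] at h'
    linarith
  rw [div_mul_eq_mul_div, le_div_iff₀ (by positivity)]
  linarith
end
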